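/- For every rational number α and all integers m, n ≥ 0, binom(α,m)_q · binom(α,n)_q = Σ_{ℓ=0}^{min(m,n)} q^{(m−ℓ)(n−ℓ)}·binom(n,ℓ)_q·binom(m,ℓ)_q·binom(α+ℓ, m+n)_q in ℚ(q). -/

import Mathlib

/-!
The `q`-rationals enter only through the translation rule `[α+1]_q = 1 + q[α]_q` (`qRat_add_one`)
and `[0]_q = 0`. The rule holds because adding `1` to `α` raises the first coefficient of the
continued fraction by `1` and leaves the others alone.

From these two facts come the absorption identities `[k+1] binom(α,k+1) = [α-k] binom(α,k)` and
`[k+1] binom(α+1,k+1) = [α+1] binom(α,k)`. The product formula is then proved by induction on `n`: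
multiply it by `[α-n]` and expand, for `ℓ ≤ m`,
`[α-n] binom(α+ℓ,m+n)
  = q^(m-ℓ) [n+ℓ+1] binom(α+ℓ,m+n+1) + [m-ℓ] binom(α+ℓ+1,m+n+1)` (`qBinom_step`).
Comparing coefficients of `binom(α+ℓ,m+n+1)` leaves an identity between `q`-binomials of integers
(`qBinom_coeff`), which reduces to `[e][n+ℓ+2] + q^e [ℓ+1]^2 = [n+1]^2` with `e = n-ℓ`.
-/

noncomputable section

open Finset

/-- The `q`-integer `[n]_q = 1 + q + ⋯ + q^{n-1}` as a rational function in `q`. -/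
def qNum (n : ℕ) : RatFunc ℚ := ∑ i ∈ Finset.range n, RatFunc.X ^ i

/-- The `q⁻¹`-integer `[n]_{q⁻¹} = 1 + q⁻¹ + ⋯ + q^{-(n-1)}`. -/
def qNumInv (n : ℕ) : RatFunc ℚ := ∑ i ∈ Finset.range n, (RatFunc.X)⁻¹ ^ i

/-- The continued fraction expansion of `p/q` computed by the Euclidean algorithm. -/
def cfNat (p q : ℕ) : List ℕ :=
  if h : q = 0 then [] else (p / q) :: cfNat q (p % q)
termination_by q
decreasing_by exact Nat.mod_lt _ (Nat.pos_of_ne_zero h)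

/-- Turn a continued fraction expansion into one of even length,
replacing a final coefficient `aₙ` by `aₙ - 1, 1` if needed. -/
def evenize (l : List ℕ) : List ℕ :=
  if l.length % 2 = 0 then l else l.dropLast ++ [l.getLast! - 1, 1]

/-- Evaluation of the Morier-Genoud--Ovsienko `q`-deformed continued fraction
`[a₁]_q + q^{a₁}/([a₂]_{q⁻¹} + q^{-a₂}/([a₃]_q + ⋯ + q^{a_{2m-1}}/[a_{2m}]_{q⁻¹}))`.
The boolean records whether the current position is odd (`true`) or even (`false`).
(The empty continued fraction is sent to `0`; since division by zero yields `0`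
in `RatFunc ℚ`, a final term `[a]_{q⁻¹} + q^{-a}/0⁻ = [a]_{q⁻¹}` comes out correctly.) -/
def qCF : Bool → List ℕ → RatFunc ℚ
  | _, [] => 0
  | true, a :: l => qNum a + RatFunc.X ^ a / qCF false l
  | false, a :: l => qNumInv a + (RatFunc.X)⁻¹ ^ a / qCF true l

/-- The Morier-Genoud--Ovsienko `q`-rational of `α > 1`, via the even-length
continued fraction expansion of `α`. -/
def qRatCF (α : ℚ) : RatFunc ℚ := qCF true (evenize (cfNat α.num.toNat α.den))

/-- The Morier-Genoud--Ovsienko `q`-rational `[α]_q ∈ ℚ(q)`, for all `α ∈ ℚ`: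
for `α > 1` it is given by the `q`-deformed continued fraction, and it is
extended to all of `ℚ` by the rule `[α-1]_q = ([α]_q - 1)/q`. -/
def qRat (α : ℚ) : RatFunc ℚ :=
  if 1 < α then qRatCF α
  else (qRatCF (α + (2 - ⌊α⌋).toNat) - qNum (2 - ⌊α⌋).toNat) / RatFunc.X ^ (2 - ⌊α⌋).toNat

/-- `{α}_q := [α+1]_q - [α]_q`, the substitute for `q^α`. -/
def qPow (α : ℚ) : RatFunc ℚ := qRat (α + 1) - qRat α

/-- The `q`-factorial `[k]_q!`. -/
def qFact (k : ℕ) : RatFunc ℚ := ∏ i ∈ Finset.range k, qNum (i + 1)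

/-- The `q`-binomial coefficient `binom(α,k)_q = [α]_q [α-1]_q ⋯ [α-k+1]_q / [k]_q!`. -/
def qBinom (α : ℚ) (k : ℕ) : RatFunc ℚ :=
  (∏ i ∈ Finset.range k, qRat (α - i)) / qFact k

/-- The Laurent-series expansion (at `q = 0`) of a rational function. -/
def lau (f : RatFunc ℚ) : LaurentSeries ℚ := ↑f

/-! ### `q`-integers -/

lemma ratX_sub_one_ne : (RatFunc.X : RatFunc ℚ) - 1 ≠ 0 := by
  intro h
  have h1 : algebraMap (Polynomial ℚ) (RatFunc ℚ) Polynomial.X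
      = algebraMap (Polynomial ℚ) (RatFunc ℚ) 1 := by
    rw [RatFunc.algebraMap_X, map_one]; exact sub_eq_zero.mp h
  have h2 := congrArg Polynomial.natDegree (RatFunc.algebraMap_injective ℚ h1)
  simp at h2

lemma qNum_eq (n : ℕ) : qNum n = (RatFunc.X ^ n - 1) / (RatFunc.X - 1) := by
  rw [eq_div_iff ratX_sub_one_ne, qNum, geom_sum_mul]

lemma qNum_zero : qNum 0 = 0 := by simp [qNum]

lemma qNum_one : qNum 1 = 1 := by simp [qNum]

lemma qNum_succ (n : ℕ) : qNum (n + 1) = 1 + RatFunc.X * qNum n := by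
  have := ratX_sub_one_ne
  rw [qNum_eq, qNum_eq]; field_simp; ring

lemma qNum_ne (n : ℕ) : qNum (n + 1) ≠ 0 := by
  intro h
  have h0 : (RatFunc.X : RatFunc ℚ) ^ (n + 1) - 1 = 0 := by
    rw [← geom_sum_mul]; change qNum (n + 1) * _ = 0; rw [h, zero_mul]
  have h1 : algebraMap (Polynomial ℚ) (RatFunc ℚ) (Polynomial.X ^ (n + 1))
      = algebraMap (Polynomial ℚ) (RatFunc ℚ) 1 := by
    rw [map_pow, RatFunc.algebraMap_X, map_one]; exact sub_eq_zero.mp h0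
  have h2 := congrArg Polynomial.natDegree (RatFunc.algebraMap_injective ℚ h1)
  simp at h2

/-! ### The translation rule for `q`-rationals -/

lemma cfNat_pos (p q : ℕ) (h : q ≠ 0) : cfNat p q = (p / q) :: cfNat q (p % q) := by
  rw [cfNat]; simp [h]

/-- Raising the first coefficient by one turns `x` into `1 + q x`. The hypothesis `1 ≤ a` is needed
for `evenize [a] = [a - 1, 1]` to involve no truncated subtraction. -/
lemma qCF_evenize_succ (a : ℕ) (l : List ℕ) (ha : 1 ≤ a) :
    qCF true (evenize ((a + 1) :: l)) = 1 + RatFunc.X * qCF true (evenize (a :: l)) := by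
  have key : ∀ (b : ℕ) (l' : List ℕ),
      qCF true ((b + 1) :: l') = 1 + RatFunc.X * qCF true (b :: l') := by
    intro b l'
    simp only [qCF, qNum_succ, pow_succ]; ring
  cases l with
  | nil =>
    obtain ⟨b, rfl⟩ := Nat.exists_eq_add_of_le' ha
    simpa [evenize] using key b [1]
  | cons c l =>
    unfold evenize
    simp only [List.length_cons, List.dropLast_cons_cons, List.getLast!_cons_eq_getLastD,
      List.getLastD_cons, List.cons_append]
    split_ifs
    · exact key _ _
    · exact key _ _

lemma qRatCF_add_one (α : ℚ) (h : 1 < α) : qRatCF (α + 1) = 1 + RatFunc.X * qRatCF α := by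
  have hden : (α + 1).den = α.den := by simp
  have hnum : (α + 1).num = α.num + α.den := by
    have h1 := Rat.mul_den_eq_num (α + 1)
    have h2 := Rat.mul_den_eq_num α
    rw [hden, add_mul, h2, one_mul] at h1
    exact_mod_cast h1.symm
  have hpos : 0 < α.num := Rat.num_pos.mpr (by linarith)
  have hle : α.den ≤ α.num.toNat := by
    have h1 : (α.den : ℤ) < α.num := by
      have h2 := Rat.mul_den_eq_num α
      have h3 : (0 : ℚ) < α.den := by exact_mod_cast α.den_pos
      have h4 : (α.den : ℚ) < α.num := by rw [← h2]; nlinarith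
      exact_mod_cast h4
    omega
  have hn : (α.num + α.den).toNat = α.num.toNat + α.den := by omega
  unfold qRatCF
  rw [hden, hnum, hn, cfNat_pos _ _ α.den_ne_zero, cfNat_pos α.num.toNat _ α.den_ne_zero,
    Nat.add_div_right _ α.den_pos, Nat.add_mod_right]
  exact qCF_evenize_succ _ _ (Nat.div_pos hle α.den_pos)

lemma qRatCF_two : qRatCF 2 = 1 + RatFunc.X := by
  have h : cfNat 2 1 = [2] := by
    rw [cfNat_pos _ _ one_ne_zero, cfNat]; simp
  have h2 : ((2 : ℚ).num.toNat) = 2 := rfl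
  have h3 : (2 : ℚ).den = 1 := rfl
  rw [qRatCF, h2, h3, h]
  simp [evenize, qCF, qNum, qNumInv]

lemma qRat_add_one (α : ℚ) : qRat (α + 1) = 1 + RatFunc.X * qRat α := by
  have hX : (RatFunc.X : RatFunc ℚ) ≠ 0 := RatFunc.X_ne_zero
  by_cases h1 : 1 < α
  · rw [qRat, qRat, if_pos h1, if_pos (by linarith), qRatCF_add_one α h1]
  by_cases h2 : 1 < α + 1
  · rw [qRat, qRat, if_neg h1, if_pos h2]
    rcases (not_lt.mp h1).eq_or_lt with rfl | h3
    · have hf : (2 - ⌊(1 : ℚ)⌋).toNat = 1 := by simp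
      rw [hf, qNum_one]
      push_cast
      field_simp
      ring
    · have hf0 : ⌊α⌋ = 0 := Int.floor_eq_zero_iff.mpr ⟨by linarith, h3⟩
      have hf : (2 - ⌊α⌋).toNat = 2 := by rw [hf0]; rfl
      have e : α + ((2 : ℕ) : ℚ) = (α + 1) + 1 := by push_cast; ring
      rw [hf, e, qRatCF_add_one _ h2, qNum_succ, qNum_one]
      field_simp
      ring
  · have hfl : ⌊α⌋ ≤ 0 := Int.floor_nonpos (by linarith)
    have hf : (2 - ⌊α⌋).toNat = (2 - ⌊α + 1⌋).toNat + 1 := by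
      rw [Int.floor_add_one]; omega
    rw [qRat, qRat, if_neg h1, if_neg h2, hf]
    generalize (2 - ⌊α + 1⌋).toNat = N
    have e : α + ((N + 1 : ℕ) : ℚ) = α + 1 + N := by push_cast; ring
    rw [e]
    have := ratX_sub_one_ne
    rw [qNum_eq, qNum_eq]
    field_simp
    ring

lemma qRat_zero : qRat 0 = 0 := by
  have hf : (2 - ⌊(0 : ℚ)⌋).toNat = 2 := by simp
  rw [qRat, if_neg (by norm_num), hf]
  have e : (0 : ℚ) + ((2 : ℕ) : ℚ) = 2 := by norm_num
  rw [e, qRatCF_two, qNum_succ, qNum_one]; simp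

lemma qRat_add_nat (α : ℚ) (n : ℕ) : qRat (α + n) = qNum n + RatFunc.X ^ n * qRat α := by
  induction n with
  | zero => simp [qNum_zero]
  | succ n ih =>
    have e : α + ((n + 1 : ℕ) : ℚ) = (α + n) + 1 := by push_cast; ring
    rw [e, qRat_add_one, ih, qNum_succ]; ring

lemma qRat_nat (n : ℕ) : qRat n = qNum n := by
  simpa [qRat_zero] using qRat_add_nat 0 n

/-! ### `q`-binomial coefficients -/

lemma qFact_succ (k : ℕ) : qFact (k + 1) = qFact k * qNum (k + 1) := by
  rw [qFact, Finset.prod_range_succ, qFact]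

lemma qFact_ne (k : ℕ) : qFact k ≠ 0 :=
  Finset.prod_ne_zero_iff.mpr fun i _ => qNum_ne i

lemma qBinom_zero (α : ℚ) : qBinom α 0 = 1 := by simp [qBinom, qFact]

lemma qBinom_succ (α : ℚ) (k : ℕ) :
    qNum (k + 1) * qBinom α (k + 1) = qRat (α - k) * qBinom α k := by
  have h1 := qNum_ne k
  have h2 := qFact_ne k
  rw [qBinom, qBinom, qFact_succ, Finset.prod_range_succ]
  field_simp

lemma qBinom_add_one_succ (α : ℚ) (k : ℕ) :
    qNum (k + 1) * qBinom (α + 1) (k + 1) = qRat (α + 1) * qBinom α k := by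
  have h1 := qNum_ne k
  have h2 := qFact_ne k
  rw [qBinom, qBinom, qFact_succ, Finset.prod_range_succ']
  have e : ∀ i : ℕ, α + 1 - ((i + 1 : ℕ) : ℚ) = α - i := fun i => by push_cast; ring
  simp only [e, Nat.cast_zero, sub_zero]
  field_simp

lemma qBinom_nat_eq_zero {n k : ℕ} (h : n < k) : qBinom n k = 0 := by
  rw [qBinom, Finset.prod_eq_zero (Finset.mem_range.mpr h) (by rw [sub_self, qRat_zero]), zero_div]

/-- The absorption identity `[ℓ+1] binom(ℓ+e,ℓ+1) = [e] binom(ℓ+e,ℓ)`. -/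
lemma qBinom_nat_succ (l e : ℕ) :
    qNum (l + 1) * qBinom ((l + e : ℕ) : ℚ) (l + 1) = qNum e * qBinom ((l + e : ℕ) : ℚ) l := by
  rw [qBinom_succ, ← qRat_nat e]
  congr 2
  push_cast; ring

/-- Expansion of `[α-n] binom(α+ℓ,m+n)` for `m = ℓ+d`: `[α-n]` is a combination of the two factors
`[α+ℓ-m-n]` and `[α+ℓ+1]` that lengthen the product at its lower and upper end. -/
lemma qBinom_step (α : ℚ) (l d n : ℕ) :
    qRat (α - n) * qBinom (α + l) (l + d + n)
      = RatFunc.X ^ d * qNum (n + l + 1) * qBinom (α + l) (l + d + n + 1)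
        + qNum d * qBinom (α + l + 1) (l + d + n + 1) := by
  apply mul_left_cancel₀ (qNum_ne (l + d + n))
  have h1 := qBinom_succ (α + l) (l + d + n)
  have h2 := qBinom_add_one_succ (α + l) (l + d + n)
  have e1 : α - n = (α + l - ((l + d + n : ℕ) : ℚ)) + d := by push_cast; ring
  have e2 : α + l + 1 = (α + l - ((l + d + n : ℕ) : ℚ)) + ((l + d + n + 1 : ℕ) : ℚ) := by
    push_cast; ring
  have hr1 := qRat_add_nat (α + l - ((l + d + n : ℕ) : ℚ)) d
  have hr2 := qRat_add_nat (α + l - ((l + d + n : ℕ) : ℚ)) (l + d + n + 1)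
  rw [← e1] at hr1
  rw [← e2] at hr2
  rw [hr2] at h2
  rw [hr1]
  generalize qRat (α + l - ((l + d + n : ℕ) : ℚ)) = y at *
  have key : qNum (l + d + n + 1) * (qNum d + RatFunc.X ^ d * y)
      = RatFunc.X ^ d * qNum (n + l + 1) * y
        + qNum d * (qNum (l + d + n + 1) + RatFunc.X ^ (l + d + n + 1) * y) := by
    have := ratX_sub_one_ne
    simp only [qNum_eq]; field_simp; ring
  linear_combination qBinom (α + l) (l + d + n) * key
    - RatFunc.X ^ d * qNum (n + l + 1) * h1 - qNum d * h2

/-- Comparison of the coefficients of `binom(α+ℓ+1,m+n+1)` for `m = ℓ+1+d`. -/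
lemma qBinom_coeff (l d n : ℕ) :
    RatFunc.X ^ (d * (n - (l + 1))) * qBinom n (l + 1) * qBinom ((l + 1 + d : ℕ) : ℚ) (l + 1)
        * (RatFunc.X ^ d * qNum (n + (l + 1) + 1))
      + RatFunc.X ^ ((d + 1) * (n - l)) * qBinom n l * qBinom ((l + 1 + d : ℕ) : ℚ) l
        * qNum (d + 1)
      = qNum (n + 1) * (RatFunc.X ^ (d * (n - l)) * qBinom ((n + 1 : ℕ) : ℚ) (l + 1)
        * qBinom ((l + 1 + d : ℕ) : ℚ) (l + 1)) := by
  rcases lt_or_ge n l with h | h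
  · rw [qBinom_nat_eq_zero h, qBinom_nat_eq_zero (by omega : n < l + 1),
      qBinom_nat_eq_zero (by omega : n + 1 < l + 1)]
    ring
  obtain ⟨e, rfl⟩ := Nat.exists_eq_add_of_le h
  have hm := qBinom_nat_succ l (d + 1)
  rw [show l + (d + 1) = l + 1 + d by omega] at hm
  have hn := qBinom_nat_succ l e
  have hn1 := qBinom_add_one_succ ((l + e : ℕ) : ℚ) l
  rw [← Nat.cast_succ, qRat_nat] at hn1
  -- The truncated exponent matters only for `e = 0`, where `binom(n,ℓ+1)` vanishes.
  have hx : RatFunc.X ^ (d * (l + e - (l + 1))) * RatFunc.X ^ d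
      * qBinom ((l + e : ℕ) : ℚ) (l + 1)
      = RatFunc.X ^ (d * e) * qBinom ((l + e : ℕ) : ℚ) (l + 1) := by
    cases e with
    | zero => rw [qBinom_nat_eq_zero (by omega : l + 0 < l + 1)]; ring
    | succ e =>
      rw [show l + (e + 1) - (l + 1) = e by omega, ← pow_add, Nat.mul_succ]
  rw [show l + e - l = e by omega]
  have key : qNum e * qNum (l + e + (l + 1) + 1) + RatFunc.X ^ e * qNum (l + 1) ^ 2
      = qNum (l + e + 1) ^ 2 := by
    have := ratX_sub_one_ne
    simp only [qNum_eq]; field_simp; ring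
  have hp : (RatFunc.X : RatFunc ℚ) ^ ((d + 1) * e) = RatFunc.X ^ (d * e) * RatFunc.X ^ e := by
    rw [← pow_add]; congr 1; ring
  rw [hp]
  apply mul_left_cancel₀ (qNum_ne l)
  simp only [Nat.succ_eq_add_one] at *
  generalize qBinom ((l + 1 + d : ℕ) : ℚ) (l + 1) = M1 at *
  generalize qBinom ((l + 1 + d : ℕ) : ℚ) l = M0 at *
  generalize qBinom ((l + e : ℕ) : ℚ) l = N0 at *
  generalize qBinom ((l + e : ℕ) : ℚ) (l + 1) = N1 at *
  generalize qBinom ((l + e + 1 : ℕ) : ℚ) (l + 1) = N2 at *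
  linear_combination qNum (l + 1) * M1 * qNum (l + e + (l + 1) + 1) * hx
    + RatFunc.X ^ (d * e) * M1 * qNum (l + e + (l + 1) + 1) * hn
    - RatFunc.X ^ (d * e) * M1 * qNum (l + e + 1) * hn1
    - RatFunc.X ^ (d * e) * RatFunc.X ^ e * N0 * qNum (l + 1) * hm
    + RatFunc.X ^ (d * e) * M1 * N0 * key

/-- The product formula with the summation range independent of `n`, as the induction needs it;
the additional terms vanish. -/
lemma qBinom_mul_aux (α : ℚ) (m n : ℕ) :
    qBinom α m * qBinom α n = ∑ ℓ ∈ Finset.range (m + 1),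
      RatFunc.X ^ ((m - ℓ) * (n - ℓ)) * qBinom n ℓ * qBinom m ℓ * qBinom (α + ℓ) (m + n) := by
  induction n with
  | zero =>
    rw [Finset.sum_range_succ', Finset.sum_eq_zero]
    · simp [qBinom_zero]
    · intro l _
      rw [qBinom_nat_eq_zero (Nat.succ_pos l)]; ring
  | succ n ih =>
    apply mul_left_cancel₀ (qNum_ne n)
    have hs := qBinom_succ α n
    rw [show qNum (n + 1) * (qBinom α m * qBinom α (n + 1))
      = qRat (α - n) * (qBinom α m * qBinom α n) by linear_combination qBinom α m * hs,
      ih, Finset.mul_sum, Finset.mul_sum]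
    have hstep : ∀ l ∈ Finset.range (m + 1),
        qRat (α - n) * (RatFunc.X ^ ((m - l) * (n - l)) * qBinom n l * qBinom m l
          * qBinom (α + l) (m + n))
        = RatFunc.X ^ ((m - l) * (n - l)) * qBinom n l * qBinom m l
          * (RatFunc.X ^ (m - l) * qNum (n + l + 1)) * qBinom (α + l) (m + n + 1)
        + RatFunc.X ^ ((m - l) * (n - l)) * qBinom n l * qBinom m l * qNum (m - l)
          * qBinom (α + l + 1) (m + n + 1) := by
      intro l hl
      obtain ⟨d, rfl⟩ := Nat.exists_eq_add_of_le (Nat.lt_succ_iff.mp (Finset.mem_range.mp hl))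
      have := qBinom_step α l d n
      rw [show l + d - l = d by omega]
      linear_combination RatFunc.X ^ (d * (n - l)) * qBinom n l
        * qBinom ((l + d : ℕ) : ℚ) l * this
    -- The last term of the shifted second sum vanishes, since `[m-m] = 0`.
    rw [Finset.sum_congr rfl hstep, Finset.sum_add_distrib, Finset.sum_range_succ',
      Finset.sum_range_succ (fun l => RatFunc.X ^ ((m - l) * (n - l)) * qBinom n l * qBinom m l
        * qNum (m - l) * qBinom (α + l + 1) (m + n + 1)) m,
      Finset.sum_range_succ' _ m, Nat.sub_self, qNum_zero, add_right_comm]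
    rw [mul_zero, zero_mul, add_zero, ← Finset.sum_add_distrib]
    congr 1
    · refine Finset.sum_congr rfl fun l hl => ?_
      obtain ⟨d, rfl⟩ := Nat.exists_eq_add_of_le (Nat.succ_le_of_lt (Finset.mem_range.mp hl))
      have h := qBinom_coeff l d n
      have e : α + ((l + 1 : ℕ) : ℚ) = α + l + 1 := by push_cast; ring
      simp only [Nat.succ_eq_add_one]
      rw [e, show l + 1 + d - (l + 1) = d by omega, show l + 1 + d - l = d + 1 by omega,
        show n + 1 - (l + 1) = n - l by omega, ← add_assoc (l + 1 + d) n 1]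
      linear_combination qBinom (α + l + 1) (l + 1 + d + n + 1) * h
    · simp only [qBinom_zero, Nat.sub_zero, Nat.cast_zero, add_zero, Nat.mul_succ, pow_add,
        ← add_assoc]
      ring

/-- `binom(α,m)_q·binom(α,n)_q
  = Σ_{ℓ=0}^{min(m,n)} q^{(m-ℓ)(n-ℓ)}·binom(n,ℓ)_q·binom(m,ℓ)_q·binom(α+ℓ,m+n)_q`. -/
theorem qBinom_mul_qBinom (α : ℚ) (m n : ℕ) :
    qBinom α m * qBinom α n = ∑ ℓ ∈ Finset.range (min m n + 1),
      RatFunc.X ^ ((m - ℓ) * (n - ℓ)) * qBinom n ℓ * qBinom m ℓ * qBinom (α + ℓ) (m + n) := by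
  rw [qBinom_mul_aux]
  symm
  apply Finset.sum_subset
  · intro l hl
    simp only [Finset.mem_range] at *
    omega
  · intro l hl hl'
    simp only [Finset.mem_range] at *
    rw [qBinom_nat_eq_zero (by omega : n < l)]
    ring

end
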